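/- Write ∏_{i=0}^{k} e(t^i z) = Σ_{m≥0} c_m z^m with c_m ∈ E. Then c_m = 0 unless (k+1) divides m, and writing ε_i = c_{i(k+1)}, each ε_i lies in E_{k+1} and has the expansion ε_i = (−1)^{ik} e_i^{k+1} + Σ_{λ ≻ (i^{k+1})} c_{λ,i} e_λ, where the sum is over partitions λ ∈ π_{k+1} that are strictly greater than (i, i, …, i) (k+1 copies) in the lexicographic order and c_{λ,i} ∈ ℂ. -/

import Mathlib

open MvPolynomial

/-- In `E = ℂ[e_0, e_1, e_2, …]` (realized as `MvPolynomial ℕ ℂ`, variable `X i = e_i`),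
the monomial `e_λ = e_{λ_1}⋯e_{λ_m}` attached to `λ : Fin m → ℕ`. -/
noncomputable def eMon (m : ℕ) (l : Fin m → ℕ) : MvPolynomial ℕ ℂ :=
  ∏ i, MvPolynomial.X (l i)

/-- `E_m ⊂ E`: the linear span of the monomials `e_λ`, `λ ∈ π_m`. -/
noncomputable def Esub (m : ℕ) : Submodule ℂ (MvPolynomial ℕ ℂ) :=
  Submodule.span ℂ {p | ∃ l : Fin m → ℕ, Antitone l ∧ p = eMon m l}

/-- The coefficient `c_m` of `z^m` in `∏_{i=0}^{k} e(t^i z)` where `e(z) = Σ_{i≥0} e_i z^i`: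
`c_m = Σ_{a_0+⋯+a_k=m} (∏_i t^{i·a_i}) e_{a_0}⋯e_{a_k}`. -/
noncomputable def wheelCoeff (k : ℕ) (t : ℂ) (m : ℕ) : MvPolynomial ℕ ℂ :=
  ∑ a ∈ Finset.Nat.antidiagonalTuple (k + 1) m,
    (∏ i : Fin (k + 1), t ^ ((i : ℕ) * a i)) • ∏ i, MvPolynomial.X (a i)

/-- `λ ≻ μ` in the lexicographic order (for partitions of the same weight):
`λ_j > μ_j` at the first index where they differ. -/
def LexGT {m : ℕ} (l l' : Fin m → ℕ) : Prop :=
  ∃ j : Fin m, l' j < l j ∧ ∀ a : Fin m, a < j → l a = l' a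

lemma wc_prod_pow (k : ℕ) (t : ℂ) (ht : IsPrimitiveRoot t (k + 1)) :
    ∏ j : Fin (k + 1), t ^ (j : ℕ) = (-1) ^ k := by
  rw [Fin.prod_univ_eq_prod_range (fun j => t ^ j) (k + 1), Finset.prod_pow_eq_pow_sum]
  have h2 := Finset.sum_range_id_mul_two (k + 1)
  simp only [Nat.add_sub_cancel] at h2
  rcases Nat.even_or_odd' k with ⟨r, hr | hr⟩
  · have h3 : ∑ i ∈ Finset.range (k + 1), i = (k + 1) * r := by
      have : (∑ i ∈ Finset.range (k + 1), i) * 2 = ((k + 1) * r) * 2 := by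
        rw [h2]
        conv_lhs => rw [mul_comm, hr]
        rw [hr]; ring
      omega
    rw [h3, pow_mul, ht.pow_eq_one, one_pow, hr, pow_mul]; simp
  · have h3 : ∑ i ∈ Finset.range (k + 1), i = (r + 1) * k := by
      have : (∑ i ∈ Finset.range (k + 1), i) * 2 = ((r + 1) * k) * 2 := by
        rw [h2, show k + 1 = (r + 1) * 2 by omega]; ring
      omega
    have h4 : IsPrimitiveRoot (t ^ (r + 1)) 2 :=
      ht.pow (by omega) (by omega)
    rw [h3, pow_mul, h4.eq_neg_one_of_two_right]

lemma wc_vanish (k : ℕ) (t : ℂ) (ht : IsPrimitiveRoot t (k + 1)) (m : ℕ)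
    (hm : ¬ (k + 1) ∣ m) : wheelCoeff k t m = 0 := by
  have hs : ∀ j : Fin (k + 1), t ^ ((j + 1 : Fin (k + 1)) : ℕ) = t * t ^ (j : ℕ) := by
    intro j
    rw [Fin.val_add_one]
    split_ifs with h
    · subst h
      rw [← pow_succ', Fin.val_last, ht.pow_eq_one, pow_zero]
    · rw [pow_succ']
  have key : wheelCoeff k t m = t ^ m • wheelCoeff k t m := by
    conv_lhs => unfold wheelCoeff
    unfold wheelCoeff
    rw [Finset.smul_sum]
    symm
    refine Finset.sum_bij' (fun a _ => a ∘ (Equiv.addRight (1 : Fin (k + 1))).symm)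
      (fun a _ => a ∘ (Equiv.addRight (1 : Fin (k + 1)))) ?_ ?_ ?_ ?_ ?_
    · intro a ha
      rw [Finset.Nat.mem_antidiagonalTuple] at ha ⊢
      rw [← ha]
      exact Equiv.sum_comp _ a
    · intro a ha
      rw [Finset.Nat.mem_antidiagonalTuple] at ha ⊢
      rw [← ha]
      exact Equiv.sum_comp _ a
    · intro a _
      funext x; simp
    · intro a _
      funext x; simp
    · intro a ha
      rw [Finset.Nat.mem_antidiagonalTuple] at ha
      rw [smul_smul]
      congr 1
      · symm
        rw [← Equiv.prod_comp (Equiv.addRight (1 : Fin (k + 1))), ← ha,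
          ← Finset.prod_pow_eq_pow_sum, ← Finset.prod_mul_distrib]
        refine Finset.prod_congr rfl fun j _ => ?_
        simp only [Function.comp, Equiv.symm_apply_apply]
        rw [pow_mul, pow_mul, Equiv.coe_addRight, hs, mul_pow]
      · exact (Equiv.prod_comp (Equiv.addRight (1 : Fin (k + 1))).symm
          (fun j => (MvPolynomial.X (a j) : MvPolynomial ℕ ℂ))).symm
  have h1 : t ^ m ≠ 1 := fun h => hm ((ht.pow_eq_one_iff_dvd m).1 h)
  have h2 : (1 - t ^ m) • wheelCoeff k t m = 0 := by
    rw [sub_smul, one_smul, ← key, sub_self]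
  rcases smul_eq_zero.1 h2 with h | h
  · exact absurd (sub_eq_zero.1 h).symm h1
  · exact h

lemma wc_lex (n i : ℕ) (l : Fin n → ℕ) (hl : Antitone l) (hsum : ∑ a, l a = i * n)
    (hne : l ≠ fun _ => i) : LexGT l (fun _ => i) := by
  classical
  have hex : (Finset.univ.filter fun j => l j ≠ i).Nonempty := by
    obtain ⟨j, hj⟩ := Function.ne_iff.1 hne
    exact ⟨j, by simpa using hj⟩
  set j := (Finset.univ.filter fun j => l j ≠ i).min' hex with hj
  have hjm : l j ≠ i := by
    have := Finset.min'_mem _ hex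
    simpa using this
  have hlt : ∀ a, a < j → l a = i := by
    intro a ha
    by_contra h
    exact absurd (Finset.min'_le _ a (by simpa using h)) (not_le.2 ha)
  refine ⟨j, ?_, hlt⟩
  by_contra hcon
  have hji : l j < i := lt_of_le_of_ne (not_lt.1 hcon) hjm
  have : ∑ a, l a < ∑ _a : Fin n, i := by
    refine Finset.sum_lt_sum (fun a _ => ?_) ⟨j, Finset.mem_univ _, hji⟩
    rcases lt_or_ge a j with h | h
    · exact (hlt a h).le
    · exact (hl h).trans hji.le
  rw [hsum] at this
  simp [mul_comm] at this

lemma wc_sort (n : ℕ) (a : Fin n → ℕ) : ∃ σ : Equiv.Perm (Fin n), Antitone (a ∘ σ) :=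
  ⟨Fin.revPerm.trans (Tuple.sort a), fun x y h => Tuple.monotone_sort a (Fin.rev_le_rev.2 h)⟩

/-- writing `∏_{i=0}^{k} e(t^i z) = Σ_{m≥0} c_m z^m`, one has `c_m = 0`
unless `(k+1) ∣ m`, and `ε_i := c_{i(k+1)}` lies in `E_{k+1}` and has the expansion
`ε_i = (-1)^{ik} e_i^{k+1} + Σ_{λ ≻ (i^{k+1})} c_{λ,i} e_λ`, the sum over partitions
`λ ∈ π_{k+1}` of the same weight `i(k+1)` strictly greater than `(i^{k+1})` in the
lexicographic order. -/
theorem wheelCoeff_vanishing_and_expansion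
    (k : ℕ) (hk : 0 < k) (t : ℂ) (ht : IsPrimitiveRoot t (k + 1)) :
    (∀ m : ℕ, ¬ (k + 1) ∣ m → wheelCoeff k t m = 0) ∧
    ∀ i : ℕ,
      wheelCoeff k t (i * (k + 1)) ∈ Esub (k + 1) ∧
      ∃ (S : Finset (Fin (k + 1) → ℕ)) (coef : (Fin (k + 1) → ℕ) → ℂ),
        (∀ l ∈ S, Antitone l ∧ (∑ a, l a) = i * (k + 1) ∧
          LexGT l (fun _ => i)) ∧
        wheelCoeff k t (i * (k + 1)) =
          ((-1 : ℂ) ^ (i * k)) • (MvPolynomial.X i : MvPolynomial ℕ ℂ) ^ (k + 1) +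
            ∑ l ∈ S, coef l • eMon (k + 1) l := by
  classical
  refine ⟨fun m hm => wc_vanish k t ht m hm, fun i => ?_⟩
  choose σ hσ using wc_sort (k + 1)
  have hmon : ∀ a : Fin (k + 1) → ℕ,
      (∏ j, MvPolynomial.X (a j) : MvPolynomial ℕ ℂ) = eMon (k + 1) (a ∘ σ a) := fun a =>
    (Equiv.prod_comp (σ a) (fun j => (MvPolynomial.X (a j) : MvPolynomial ℕ ℂ))).symm
  constructor
  · unfold wheelCoeff
    refine Submodule.sum_mem _ fun a _ => Submodule.smul_mem _ _ ?_
    rw [hmon]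
    exact Submodule.subset_span ⟨_, hσ a, rfl⟩
  · set A := (Finset.Nat.antidiagonalTuple (k + 1) (i * (k + 1))).erase (fun _ => i) with hA
    have hc : (fun _ => i) ∈ Finset.Nat.antidiagonalTuple (k + 1) (i * (k + 1)) := by
      rw [Finset.Nat.mem_antidiagonalTuple]
      simp [mul_comm]
    refine ⟨A.image (fun a => a ∘ σ a), fun l => ∑ a ∈ A with a ∘ σ a = l,
      ∏ j : Fin (k + 1), t ^ ((j : ℕ) * a j), ?_, ?_⟩
    · intro l hl
      obtain ⟨a, ha, rfl⟩ := Finset.mem_image.1 hl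
      obtain ⟨hne, hmem⟩ := Finset.mem_erase.1 ha
      rw [Finset.Nat.mem_antidiagonalTuple] at hmem
      have hs : ∑ j, (a ∘ σ a) j = i * (k + 1) := by
        rw [← hmem]; exact Equiv.sum_comp (σ a) a
      refine ⟨hσ a, hs, wc_lex _ _ _ (hσ a) hs fun h => hne ?_⟩
      funext j
      simpa using congrFun h ((σ a).symm j)
    · conv_lhs => unfold wheelCoeff
      rw [← Finset.add_sum_erase _ _ hc]
      congr 1
      · simp only [pow_mul, Finset.prod_pow, wc_prod_pow k t ht, Finset.prod_const,
          Finset.card_univ, Fintype.card_fin]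
        rw [← pow_mul, ← pow_mul, mul_comm k i]
      · rw [← Finset.sum_fiberwise_of_maps_to
          (fun a ha => Finset.mem_image_of_mem (fun a => a ∘ σ a) ha)]
        refine Finset.sum_congr rfl fun l _ => ?_
        rw [Finset.sum_smul]
        refine Finset.sum_congr rfl fun a ha => ?_
        rw [hmon, (Finset.mem_filter.1 ha).2]
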